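/- Assume that every ω₁-indexed family of functions from ω to ω is eventually dominated by a single function: for every family (f_α)_{α<ω₁} in ω^ω there exists g ∈ ω^ω with f_α <* g for all α < ω₁ (this follows from MA + ¬CH). Then for every set A ⊆ ω^ω that is a union of ℵ₁-many Borel sets, either there exists a Hechler tree H with [H] ∩ A = ∅, or there exists a Laver tree L with [L] ⊆ A. -/

import Mathlib

open scoped Ordinal

/-- The restriction `x↾n` of `x : ℕ → ℕ` to its first `n` values, as a finite sequence. -/
def res (x : ℕ → ℕ) (n : ℕ) : List ℕ := List.ofFn fun i : Fin n => x i

/-- A subtree of `ω^{<ω}`: a set of finite sequences closed under initial segments. -/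
def IsSubtree (T : Set (List ℕ)) : Prop := ∀ s ∈ T, ∀ t : List ℕ, t <+: s → t ∈ T

/-- `[T]`, the set of branches of a subtree `T`. -/
def branches (T : Set (List ℕ)) : Set (ℕ → ℕ) := {x | ∀ n, res x n ∈ T}

/-- A Hechler tree: a (nonempty) subtree in which every node splits cofinitely often. -/
def IsHechler (T : Set (List ℕ)) : Prop :=
  IsSubtree T ∧ [] ∈ T ∧ ∀ s ∈ T, {n : ℕ | s ++ [n] ∉ T}.Finite

/-- A Laver tree: a (nonempty) subtree in which every node splits infinitely often. -/
def IsLaver (T : Set (List ℕ)) : Prop :=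
  IsSubtree T ∧ [] ∈ T ∧ ∀ s ∈ T, {n : ℕ | s ++ [n] ∈ T}.Infinite

/-- `f <* g`: eventual domination. -/
def EvLt (f g : ℕ → ℕ) : Prop := ∀ᶠ n in Filter.atTop, f n < g n

/-!
Call `X` null at a node `s` if the branches of some Hechler tree with stem `s` avoid `X`. If `X` is
null at almost all immediate successors of `s`, it is null at `s`; and since families indexed by `K`
are dominated, an amalgamation of Hechler trees shows that if each `X k`, `k : K`, is null at all
nodes of a set `P` which contains almost all successors of its members, then so is `⋃ k, X k`.

A nonempty analytic set is a continuous image of `ω^ω`, so `A` is the range of a continuous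
`f : K^ω → ω^ω`, with `K` again dominated. If `A` is not null at the root, build a Laver tree whose
nodes `s` carry finite approximations `u` to a point of `K^ω` such that `f[u]`, the image of the set
of points extending `u`, is not null at `s`. By the amalgamation, `s` has a rank measuring how far
one has to go up the tree to reach a node at which `f[u⌢a]` is not null for some `a`; infinitely
many successors of `s` either decrease the rank or allow `u` to be lengthened. Along a branch `x`,
the approximations therefore converge to some `z`, and `f z = x` by continuity.
-/

open Filter Function Topology MeasureTheory
open PiNat (cylinder)

section Res

lemma length_res (x : ℕ → ℕ) (n : ℕ) : (res x n).length = n := by simp [res]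

lemma res_succ (x : ℕ → ℕ) (n : ℕ) : res x (n + 1) = res x n ++ [x n] := by
  rw [res, List.ofFn_succ_last]
  simp [res]

lemma take_res (x : ℕ → ℕ) {m n : ℕ} (h : m ≤ n) : (res x n).take m = res x m := by
  apply List.ext_getElem <;> simp [res, h]

lemma mem_cylinder_iff_res_eq {x y : ℕ → ℕ} {n : ℕ} : y ∈ cylinder x n ↔ res y n = res x n := by
  simp [PiNat.mem_cylinder_iff, res, List.ofFn_inj, funext_iff, Fin.forall_iff]

lemma res_injective (x : ℕ → ℕ) : Injective (res x) := fun m n h => by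
  simpa only [length_res] using congrArg List.length h

lemma res_length_eq_of_prefix {x : ℕ → ℕ} {s t : List ℕ} (hst : s <+: t)
    (ht : res x t.length = t) : res x s.length = s := by
  rw [← take_res x hst.length_le, ht, ← List.prefix_iff_eq_take.1 hst]

end Res

section HechlerNull

variable {X : Set (ℕ → ℕ)}

/-- The set of branches of the Hechler tree with stem `s` in which the immediate successors of a
node `t ⊇ s` are the `t⌢n` with `h t ≤ n`. -/
def hechlerCone (h : List ℕ → ℕ) (s : List ℕ) : Set (ℕ → ℕ) :=
  {x | res x s.length = s ∧ ∀ n ≥ s.length, h (res x n) ≤ x n}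

lemma mem_hechlerCone_res {h : List ℕ → ℕ} {x : ℕ → ℕ} {m : ℕ} :
    x ∈ hechlerCone h (res x m) ↔ ∀ n ≥ m, h (res x n) ≤ x n := by
  simp [hechlerCone, length_res]

/-- `X` is null at `s` if it is disjoint from the branches of a Hechler tree with stem `s`. It
suffices to consider the Hechler trees given by a bounding function, as every Hechler tree contains
one of them. -/
def HechlerNull (X : Set (ℕ → ℕ)) (s : List ℕ) : Prop :=
  ∃ h, Disjoint (hechlerCone h s) X

lemma exists_mem_of_not_hechlerNull {s : List ℕ} (hs : ¬ HechlerNull X s) :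
    ∃ x ∈ X, res x s.length = s := by
  by_contra! hX
  exact hs ⟨fun _ => 0, Set.disjoint_left.2 fun x hx hxX => hX x hxX hx.1⟩

lemma exists_disjoint_hechlerCone_of_forall_hechlerNull {P : Set (List ℕ)}
    (hP : ∀ s ∈ P, HechlerNull X s) : ∃ h, ∀ s ∈ P, Disjoint (hechlerCone h s) X := by
  choose! h hh using hP
  refine ⟨fun t => (Finset.range (t.length + 1)).sup fun i => h (t.take i) t, fun s hs => ?_⟩
  refine Set.disjoint_of_subset_left ?_ (hh s hs)
  refine fun x ⟨hxs, hx⟩ => ⟨hxs, fun n hn => le_trans ?_ (hx n hn)⟩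
  have hstem : (res x n).take s.length = s := (take_res x hn).trans hxs
  calc h s (res x n) = h ((res x n).take s.length) (res x n) := by rw [hstem]
    _ ≤ _ := Finset.le_sup (f := fun i => h ((res x n).take i) (res x n))
      (Finset.mem_range.2 (by rw [length_res]; lia))

lemma hechlerNull_of_eventually_append {s : List ℕ}
    (hs : ∀ᶠ n in atTop, HechlerNull X (s ++ [n])) : HechlerNull X s := by
  obtain ⟨b, hb⟩ := eventually_atTop.1 hs
  obtain ⟨h, hh⟩ := exists_disjoint_hechlerCone_of_forall_hechlerNull
    (P := {t | HechlerNull X t}) fun _ ht => ht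
  refine ⟨fun t => max b (h t), Set.disjoint_left.2 fun x ⟨hxs, hx⟩ => ?_⟩
  have hsucc : res x (s.length + 1) = s ++ [x s.length] := by rw [res_succ, hxs]
  have hnull : HechlerNull X (res x (s.length + 1)) :=
    hsucc ▸ hb _ ((le_max_left _ _).trans (hx s.length le_rfl))
  exact Set.disjoint_left.1 (hh _ hnull) <| mem_hechlerCone_res.2 fun n hn =>
    (le_max_right _ _).trans (hx n (by lia))

lemma exists_isHechler_of_hechlerNull_nil (hX : HechlerNull X []) :
    ∃ H : Set (List ℕ), IsHechler H ∧ branches H ∩ X = ∅ := by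
  obtain ⟨h, hh⟩ := hX
  refine ⟨{t | ∀ u n, u ++ [n] <+: t → h u ≤ n},
    ⟨fun s hs t hts u n hu => hs u n (hu.trans hts), by simp, fun s hs => ?_⟩, ?_⟩
  · refine (Set.finite_Iio (h s)).subset fun n hn => ?_
    by_contra! hle
    refine hn fun u m hu => ?_
    rcases List.prefix_concat_iff.1 hu with heq | hprefix
    · obtain ⟨rfl, rfl⟩ : u = s ∧ m = n := by simpa using heq
      simpa using hle
    · exact hs u m hprefix
  · refine Set.disjoint_iff_inter_eq_empty.1 (hh.mono_left fun x hx => ?_)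
    exact ⟨rfl, fun n _ => hx (n + 1) _ _ (res_succ x n ▸ List.prefix_rfl)⟩

end HechlerNull

section Domination

/-- Every family of functions indexed by `K` is eventually dominated by a single function; that is,
`K` has cardinality less than the bounding number `𝔟`. -/
def FamiliesDominated (K : Type*) : Prop :=
  ∀ F : K → ℕ → ℕ, ∃ g : ℕ → ℕ, ∀ a, EvLt (F a) g

lemma familiesDominated_nat : FamiliesDominated ℕ := fun F => by
  refine ⟨fun m => (Finset.range (m + 1)).sup (F · m) + 1, fun n => ?_⟩
  filter_upwards [eventually_ge_atTop n] with m hnm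
  exact Nat.lt_succ_of_le <|
    Finset.le_sup (f := (F · m)) (Finset.mem_range.2 (Nat.lt_succ_of_le hnm))

lemma FamiliesDominated.prod {K L : Type*} (hK : FamiliesDominated K)
    (hL : FamiliesDominated L) : FamiliesDominated (K × L) := fun F => by
  choose g hg using fun a => hL fun b => F (a, b)
  obtain ⟨G, hG⟩ := hK g
  refine ⟨G, fun ⟨a, b⟩ => ?_⟩
  filter_upwards [hg a b, hG a] with m h₁ h₂ using h₁.trans h₂

lemma FamiliesDominated.of_injective {K L : Type*} (hL : FamiliesDominated L) {e : K → L}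
    (he : Injective e) : FamiliesDominated K := fun F => by
  obtain ⟨g, hg⟩ := hL (extend e F 0)
  exact ⟨g, fun a => by simpa only [he.extend_apply] using hg (e a)⟩

lemma FamiliesDominated.exists_forall_cofinite_lt {K D : Type*} [Denumerable D]
    (hK : FamiliesDominated K) (F : K → D → ℕ) : ∃ g : D → ℕ, ∀ a, ∀ᶠ d in cofinite,
      F a d < g d := by
  obtain ⟨g, hg⟩ := hK fun a n => F a (Denumerable.ofNat D n)
  refine ⟨g ∘ Encodable.encode, fun a => ?_⟩
  have hencode : Tendsto (Encodable.encode : D → ℕ) cofinite atTop :=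
    Nat.cofinite_eq_atTop ▸ Encodable.encode_injective.tendsto_cofinite
  filter_upwards [hencode.eventually (hg a)] with d hd
  simpa only [Denumerable.ofNat_encode, comp_apply] using hd

/-- A function `g` dominating the bounding functions of all the `X k` exceeds that of `X k` at
all but finitely many nodes; so a branch bounded below by `g` is, from some node on, also bounded
below by that of `X k`. -/
lemma FamiliesDominated.hechlerNull_iUnion {K : Type*} (hK : FamiliesDominated K)
    {X : K → Set (ℕ → ℕ)} {P : Set (List ℕ)}
    (hP : ∀ s ∈ P, ∀ᶠ n in atTop, s ++ [n] ∈ P) (hX : ∀ s ∈ P, ∀ k, HechlerNull (X k) s)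
    {s : List ℕ} (hs : s ∈ P) : HechlerNull (⋃ k, X k) s := by
  choose! b hb using fun s hs => eventually_atTop.1 (hP s hs)
  choose h hh using fun k =>
    exists_disjoint_hechlerCone_of_forall_hechlerNull fun s hs => hX s hs k
  obtain ⟨g, hg⟩ := hK.exists_forall_cofinite_lt h
  refine ⟨fun t => max (b t) (g t), Set.disjoint_left.2 fun x ⟨hxs, hx⟩ hxX => ?_⟩
  obtain ⟨k, hk⟩ := Set.mem_iUnion.1 hxX
  have hxP : ∀ n ≥ s.length, res x n ∈ P := fun n hn => by
    induction n, hn using Nat.le_induction with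
    | base => rwa [hxs]
    | succ n hn ih =>
      exact res_succ x n ▸ hb _ ih _ ((le_max_left _ _).trans (hx n hn))
  have hdom : ∀ᶠ n in atTop, h k (res x n) < g (res x n) :=
    (Nat.cofinite_eq_atTop ▸ (res_injective x).tendsto_cofinite).eventually (hg k)
  obtain ⟨m, hm⟩ := eventually_atTop.1 (hdom.and (eventually_ge_atTop s.length))
  refine Set.disjoint_left.1 (hh k _ (hxP m (hm m le_rfl).2)) (mem_hechlerCone_res.2 ?_) hk
  exact fun n hn => (hm n hn).1.le.trans ((le_max_right _ _).trans (hx n (hm n hn).2))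

end Domination

section Rank

/-- The nodes of rank at most `α` over `Z`: those of rank `0` are the members of `Z`, and a node
outside `Z` has rank at most `α` if infinitely many of its immediate successors have rank less than
`α`. -/
def rankLE (Z : Set (List ℕ)) (α : Ordinal.{0}) : Set (List ℕ) :=
  Z ∪ {s | ∃ᶠ n in atTop, ∃ β : Set.Iio α, s ++ [n] ∈ rankLE Z β}
termination_by α
decreasing_by exact β.2

variable {Z : Set (List ℕ)}

lemma mem_rankLE_iff {α : Ordinal} {s : List ℕ} :
    s ∈ rankLE Z α ↔ s ∈ Z ∨ ∃ᶠ n in atTop, ∃ β < α, s ++ [n] ∈ rankLE Z β := by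
  rw [rankLE]
  simp

lemma exists_mem_rankLE_of_frequently {s : List ℕ}
    (hs : ∃ᶠ n in atTop, ∃ α, s ++ [n] ∈ rankLE Z α) : ∃ α, s ∈ rankLE Z α := by
  choose! rk hrk using fun n (hn : ∃ α, s ++ [n] ∈ rankLE Z α) => hn
  exact ⟨⨆ n, rk n + 1, mem_rankLE_iff.2 <| .inr <|
    hs.mono fun n hn => ⟨rk n, Ordinal.lt_iSup_add_one rk n, hrk n hn⟩⟩

lemma exists_prefix_of_mem_rankLE {α : Ordinal} {s : List ℕ} (hs : s ∈ rankLE Z α) :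
    ∃ t ∈ Z, s <+: t := by
  induction α using WellFoundedLT.induction generalizing s with
  | ind α ih =>
    rcases mem_rankLE_iff.1 hs with hZ | hsucc
    · exact ⟨s, hZ, List.prefix_rfl⟩
    · obtain ⟨n, β, hβ, hn⟩ := hsucc.exists
      obtain ⟨t, ht, hst⟩ := ih β hβ hn
      exact ⟨t, ht, (List.prefix_append s [n]).trans hst⟩

lemma FamiliesDominated.exists_mem_rankLE {K : Type*} (hK : FamiliesDominated K)
    {X : K → Set (ℕ → ℕ)} {s : List ℕ} (hs : ¬ HechlerNull (⋃ k, X k) s) :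
    ∃ α, s ∈ rankLE {t | ∃ k, ¬ HechlerNull (X k) t} α := by
  set Z := {t | ∃ k, ¬ HechlerNull (X k) t}
  by_contra hrank
  refine hs (hK.hechlerNull_iUnion (P := {t | ¬ ∃ α, t ∈ rankLE Z α}) (fun t ht => ?_)
    (fun t ht k => ?_) hrank)
  · by_contra hsucc
    exact ht (exists_mem_rankLE_of_frequently <| by
      simpa only [Set.mem_ofPred_eq, not_eventually, not_not] using hsucc)
  · by_contra hk
    exact ht ⟨0, mem_rankLE_iff.2 (.inl ⟨k, hk⟩)⟩

end Rank

theorem exists_isLaver_of_frequently_step {S : Type*} (R : S → ℕ → S → Prop)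
    (hR : ∀ p, ∃ᶠ n in atTop, ∃ q, R p n q) (p₀ : S) :
    ∃ L : Set (List ℕ), IsLaver L ∧ ∀ x ∈ branches L, ∃ p : ℕ → S,
      p 0 = p₀ ∧ ∀ n, R (p n) (x n) (p (n + 1)) := by
  classical
  let next (p : S) (n : ℕ) : Option S := if h : ∃ q, R p n q then some h.choose else none
  have next_spec {p n q} (h : next p n = some q) : R p n q := by
    by_cases hq : ∃ q, R p n q
    · obtain rfl : hq.choose = q := by simpa [next, hq] using h
      exact hq.choose_spec
    · simp [next, hq] at h
  refine ⟨{s | (s.foldlM next p₀).isSome}, ⟨?_, rfl, fun s hs => ?_⟩, fun x hx => ?_⟩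
  · rintro _ hs s ⟨t, rfl⟩
    rw [Set.mem_ofPred_eq, List.foldlM_append] at hs
    exact Option.isSome_of_isSome_bind hs
  · obtain ⟨p, hp⟩ := Option.isSome_iff_exists.1 hs
    refine Nat.frequently_atTop_iff_infinite.1 ((hR p).mono fun n hn => ?_)
    simp [List.foldlM_append, hp, next, hn]
  · choose p hp using fun n => Option.isSome_iff_exists.1 (hx n)
    refine ⟨p, Option.some.inj (hp 0).symm, fun n => next_spec ?_⟩
    simpa [res_succ, List.foldlM_append, hp n] using hp (n + 1)

section Cylinder

variable {E : ℕ → Type*}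

lemma tendsto_of_mem_cylinder [∀ i, TopologicalSpace (E i)] {y : ℕ → ∀ i, E i} {z : ∀ i, E i}
    {k : ℕ → ℕ} (hk : Tendsto k atTop atTop) (hy : ∀ n, y n ∈ cylinder z (k n)) :
    Tendsto y atTop (𝓝 z) :=
  tendsto_pi_nhds.2 fun i => tendsto_const_nhds.congr' <|
    (hk.eventually_gt_atTop i).mono fun n hn => (hy n i hn).symm

lemma exists_forall_mem_cylinder {z : ℕ → ∀ i, E i} {k : ℕ → ℕ} (hmono : Monotone k)
    (hk : Tendsto k atTop atTop) (hz : ∀ n, z (n + 1) ∈ cylinder (z n) (k n)) :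
    ∃ y, ∀ n, y ∈ cylinder (z n) (k n) := by
  have hagree {m n} (hmn : m ≤ n) : z n ∈ cylinder (z m) (k m) := by
    induction n, hmn using Nat.le_induction with
    | base => exact PiNat.self_mem_cylinder _ _
    | succ n hmn ih =>
      exact fun i hi => (hz n i (hi.trans_le (hmono hmn))).trans (ih i hi)
  choose N hN using fun i => (hk.eventually_gt_atTop i).exists
  refine ⟨fun i => z (N i) i, fun n i hi => ?_⟩
  rcases le_total n (N i) with h | h
  · exact hagree h i hi
  · exact (hagree h i (hN i)).symm

lemma tendsto_atTop_of_lt_or_rank_lt {α : Type*} [Preorder α] [WellFoundedLT α] {k : ℕ → ℕ}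
    {r : ℕ → α} (h : ∀ n, k n < k (n + 1) ∨ k (n + 1) = k n ∧ r (n + 1) < r n) :
    Tendsto k atTop atTop := by
  have hmono : Monotone k :=
    monotone_nat_of_le_succ fun n => (h n).elim (·.le) (·.1.ge)
  have hincr (n : ℕ) : ∃ m, k n < k (m + 1) := by
    by_contra! hle
    refine not_strictAnti_of_wellFoundedLT (fun i => r (n + i)) (strictAnti_nat_of_succ_lt ?_)
    intro i
    exact ((h (n + i)).resolve_left
      (((hle _).trans (hmono (Nat.le_add_right n i))).not_gt)).2
  refine tendsto_atTop_atTop_of_monotone hmono fun b => ?_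
  induction b with
  | zero => exact ⟨0, Nat.zero_le _⟩
  | succ b ih =>
    obtain ⟨n, hn⟩ := ih
    obtain ⟨m, hm⟩ := hincr n
    exact ⟨m + 1, hn.trans_lt hm⟩

end Cylinder

section LabeledNode

variable {K : Type*} {f : (ℕ → K) → ℕ → ℕ}

/-- The nodes at which the approximation `z↾k` can be lengthened: for some `a`, the image under `f`
of the points extending `(z↾k)⌢a` is not null there. -/
def extensionNodes (f : (ℕ → K) → ℕ → ℕ) (z : ℕ → K) (k : ℕ) : Set (List ℕ) :=
  {s | ∃ a, ¬ HechlerNull (f '' cylinder (update z k a) (k + 1)) s}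

/-- A node of the Laver tree under construction, together with the approximation to a preimage under
`f` of the branches through it and a bound on its rank. The approximation is the restriction of
`label` to `level`; the other values of `label` are irrelevant. -/
structure LabeledNode (f : (ℕ → K) → ℕ → ℕ) where
  node : List ℕ
  label : ℕ → K
  level : ℕ
  rank : Ordinal.{0}
  node_mem : node ∈ rankLE (extensionNodes f label level) rank

lemma FamiliesDominated.exists_labeledNode (hK : FamiliesDominated K) {s : List ℕ} {z : ℕ → K}
    {k : ℕ} (hs : ¬ HechlerNull (f '' cylinder z k) s) :
    ∃ p : LabeledNode f, p.node = s ∧ p.label = z ∧ p.level = k := by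
  rw [← PiNat.iUnion_cylinder_update, Set.image_iUnion] at hs
  obtain ⟨α, hα⟩ := hK.exists_mem_rankLE hs
  exact ⟨⟨s, z, k, α, hα⟩, rfl, rfl, rfl⟩

namespace LabeledNode

/-- The admissible steps of the construction: pass to an immediate successor, and either lengthen
the approximation or keep it and decrease the rank. -/
def Step (p : LabeledNode f) (n : ℕ) (q : LabeledNode f) : Prop :=
  q.node = p.node ++ [n] ∧ q.label ∈ cylinder p.label p.level ∧
    (p.level < q.level ∨ q.level = p.level ∧ q.rank < p.rank)

lemma frequently_exists_step (hK : FamiliesDominated K) (p : LabeledNode f) :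
    ∃ᶠ n in atTop, ∃ q, p.Step n q := by
  rcases mem_rankLE_iff.1 p.node_mem with ⟨a, ha⟩ | hrank
  · have hsucc := mt hechlerNull_of_eventually_append ha
    refine (not_eventually.1 hsucc).mono fun n hn => ?_
    obtain ⟨q, hnode, hlabel, hlevel⟩ := hK.exists_labeledNode hn
    exact ⟨q, hnode, hlabel ▸ PiNat.update_mem_cylinder _ _ _, .inl (by lia)⟩
  · refine hrank.mono fun n ⟨β, hβ, hn⟩ => ?_
    exact ⟨⟨p.node ++ [n], p.label, p.level, β, hn⟩, rfl, PiNat.self_mem_cylinder _ _,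
      .inr ⟨rfl, hβ⟩⟩

lemma exists_mem_cylinder_res_eq (p : LabeledNode f) :
    ∃ z ∈ cylinder p.label p.level, res (f z) p.node.length = p.node := by
  obtain ⟨t, ⟨a, ht⟩, hpt⟩ := exists_prefix_of_mem_rankLE p.node_mem
  obtain ⟨_, ⟨z, hz, rfl⟩, hzt⟩ := exists_mem_of_not_hechlerNull ht
  refine ⟨z, fun i hi => ?_, res_length_eq_of_prefix hpt hzt⟩
  rw [hz i (by lia), update_of_ne hi.ne]

lemma mem_range_of_forall_step [TopologicalSpace K] (hf : Continuous f) {x : ℕ → ℕ}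
    {p : ℕ → LabeledNode f} (hp₀ : (p 0).node = []) (hp : ∀ n, (p n).Step (x n) (p (n + 1))) :
    x ∈ Set.range f := by
  have hnode (n : ℕ) : (p n).node = res x n := by
    induction n with
    | zero => simpa [res] using hp₀
    | succ n ih => rw [(hp n).1, ih, res_succ]
  have hmono : Monotone fun n => (p n).level :=
    monotone_nat_of_le_succ fun n => (hp n).2.2.elim (·.le) (·.1.ge)
  have hlevel : Tendsto (fun n => (p n).level) atTop atTop :=
    tendsto_atTop_of_lt_or_rank_lt (r := fun n => (p n).rank) fun n => (hp n).2.2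
  obtain ⟨z, hz⟩ := exists_forall_mem_cylinder hmono hlevel fun n => (hp n).2.1
  choose y hy hfy using fun n => (p n).exists_mem_cylinder_res_eq
  have hyz : Tendsto y atTop (𝓝 z) :=
    tendsto_of_mem_cylinder hlevel fun n i hi => (hy n i hi).trans (hz n i hi).symm
  have hfyx : Tendsto (fun n => f (y n)) atTop (𝓝 x) :=
    tendsto_of_mem_cylinder tendsto_id fun n => mem_cylinder_iff_res_eq.2 <| by
      simpa only [hnode, length_res, id_eq] using hfy n
  exact ⟨z, tendsto_nhds_unique ((hf.tendsto z).comp hyz) hfyx⟩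

end LabeledNode

theorem FamiliesDominated.hechler_laver_dichotomy_range [TopologicalSpace K]
    (hK : FamiliesDominated K) (hf : Continuous f) :
    (∃ H : Set (List ℕ), IsHechler H ∧ branches H ∩ Set.range f = ∅) ∨
    (∃ L : Set (List ℕ), IsLaver L ∧ branches L ⊆ Set.range f) := by
  refine or_iff_not_imp_left.2 fun hH => ?_
  have hnull : ¬ HechlerNull (Set.range f) [] := mt exists_isHechler_of_hechlerNull_nil hH
  obtain ⟨_, ⟨z, rfl⟩, -⟩ := exists_mem_of_not_hechlerNull hnull
  rw [← Set.image_univ, ← PiNat.cylinder_zero z] at hnull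
  obtain ⟨p₀, hp₀, -, -⟩ := hK.exists_labeledNode hnull
  obtain ⟨L, hL, hbranch⟩ := exists_isLaver_of_frequently_step LabeledNode.Step
    (LabeledNode.frequently_exists_step hK) p₀
  refine ⟨L, hL, fun x hx => ?_⟩
  obtain ⟨p, rfl, hp⟩ := hbranch x hx
  exact LabeledNode.mem_range_of_forall_step hf hp₀ hp

end LabeledNode

lemma exists_continuous_range_eq_iUnion {ι Y : Type*} [TopologicalSpace ι] [DiscreteTopology ι]
    [TopologicalSpace Y] {B : ι → Set Y} (hB : ∀ a, AnalyticSet (B a))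
    (hne : ∀ a, (B a).Nonempty) :
    ∃ f : (ℕ → ι × ℕ) → Y, Continuous f ∧ Set.range f = ⋃ a, B a := by
  choose F hFc hFr using fun a =>
    ((AnalyticSet_def (B a)).mp (hB a)).resolve_left (hne a).ne_empty
  refine ⟨fun z => F (z 0).1 fun n => (z n).2, ?_, ?_⟩
  · have hF : Continuous (uncurry F) := continuous_prod_of_discrete_left.2 hFc
    exact hF.comp (f := fun z : ℕ → ι × ℕ => ((z 0).1, fun n => (z n).2)) (by fun_prop)
  · ext x
    simp only [Set.mem_range, Set.mem_iUnion, ← hFr]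
    exact ⟨fun ⟨z, hz⟩ => ⟨_, _, hz⟩, fun ⟨a, y, hy⟩ => ⟨fun n => (a, y n), hy⟩⟩

theorem hechler_laver_dichotomy_of_dominating_general {ι : Type*} (hdom : FamiliesDominated ι)
    (B : ι → Set (ℕ → ℕ)) (hB : ∀ a, AnalyticSet (B a)) :
    (∃ H : Set (List ℕ), IsHechler H ∧ branches H ∩ (⋃ a, B a) = ∅) ∨
    (∃ L : Set (List ℕ), IsLaver L ∧ branches L ⊆ ⋃ a, B a) := by
  let κ := {a // (B a).Nonempty}
  let : TopologicalSpace κ := ⊥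
  have : DiscreteTopology κ := ⟨rfl⟩
  have hκ : FamiliesDominated (κ × ℕ) :=
    (hdom.of_injective Subtype.val_injective).prod familiesDominated_nat
  obtain ⟨f, hf, hrange⟩ :=
    exists_continuous_range_eq_iUnion (fun a : κ => hB a) fun a => a.2
  have hB_ne : (⋃ a : κ, B a) = ⋃ a, B a := by
    simp only [κ, Set.iUnion_subtype, Set.iUnion_nonempty_self]
  rw [← hB_ne, ← hrange]
  exact hκ.hechler_laver_dichotomy_range hf

lemma mk_subtype_lt_omega_one : Cardinal.mk {o : Ordinal // o < ω₁} = Cardinal.aleph 1 :=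
  (Cardinal.mk_Iio_ordinal ω₁).trans <| by
    rw [Ordinal.card_omega, Cardinal.lift_aleph, Ordinal.lift_one]

lemma nonempty_equiv_subtype_lt_omega_one.{u, v} :
    Nonempty ({o : Ordinal.{u} // o < ω₁} ≃ {o : Ordinal.{v} // o < ω₁}) :=
  Cardinal.lift_mk_eq'.1 <| by
    simp only [mk_subtype_lt_omega_one, Cardinal.lift_aleph, Ordinal.lift_one]

theorem hechler_laver_dichotomy_of_dominating
    (hdom : ∀ f : {o : Ordinal // o < ω₁} → ℕ → ℕ,
      ∃ g : ℕ → ℕ, ∀ a : {o : Ordinal // o < ω₁}, EvLt (f a) g)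
    (A : Set (ℕ → ℕ)) (B : {o : Ordinal // o < ω₁} → Set (ℕ → ℕ))
    (hB : ∀ a, MeasurableSet (B a)) (hA : A = ⋃ a, B a) :
    (∃ H : Set (List ℕ), IsHechler H ∧ branches H ∩ A = ∅) ∨
    (∃ L : Set (List ℕ), IsLaver L ∧ branches L ⊆ A) := by
  subst hA
  obtain ⟨e⟩ := nonempty_equiv_subtype_lt_omega_one
  exact hechler_laver_dichotomy_of_dominating_general
    (FamiliesDominated.of_injective hdom e.injective) B fun a => (hB a).analyticSet
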